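/- arXiv:1905.11628 — 2 statements merged into one kernel-verified Lean document; each statement's English description precedes it below -/
import Mathlib

section
/- (Gottschalk–Hedlund type growth in Cesàro average.) Let M be a compact metric space, φ : ℝ × M → M a continuous flow, and μ a φ-invariant Borel probability measure which is the unique φ-invariant Borel probability measure on M (unique ergodicity). Let f : M → ℝ be continuous and set F_t(x) := ∫₀^t f(φ_τ(x)) dτ. Assume f is not a measurable coboundary for φ, i.e., there is no Borel measurable function u : M → ℝ such that for every t ∈ ℝ, F_t(x) = u(φ_t(x)) − u(x) for μ-almost every x. Then for every C > 1, lim_{T → ∞} (1/T) ∫₀^T μ{x ∈ M : |F_t(x)| < C} dt = 0. -/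
open MeasureTheory Filter
open scoped ProbabilityTheory ENNReal
open ProbabilityTheory

lemma exists_transfer {M : Type*} [MeasurableSpace M]
    (φ : ℝ → M → M) (hinvφ : ∀ t x, φ (-t) (φ t x) = x)
    (μ : Measure M) [IsProbabilityMeasure μ]
    (hinv : ∀ t : ℝ, MeasurePreserving (φ t) μ μ)
    (F : ℝ → M → ℝ) (hF : ∀ t, Measurable (F t))
    (ν : Measure (M × ℝ)) [IsProbabilityMeasure ν] (hfst : ν.fst = μ)
    (hν : ∀ t : ℝ, MeasurePreserving (fun p : M × ℝ => (φ t p.1, p.2 + F t p.1)) ν ν) :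
    ∃ u : M → ℝ, Measurable u ∧ ∀ t : ℝ, ∀ᵐ x ∂μ, F t x = u (φ t x) - u x := by
  have hdis : μ ⊗ₘ ν.condKernel = ν := by
    rw [← hfst]; exact ν.disintegrate ν.condKernel
  set κ := ν.condKernel with hκ
  have key : ∀ t : ℝ, ∀ᵐ x ∂μ, ∀ c : ℝ, κ x (Set.Iic c) = κ (φ t x) (Set.Iic (c + F t x)) := by
    intro t
    have hm := (hinv t).measurable
    have hmF := hF t
    have hg : Measurable (fun p : M × ℝ => p.2 - F t p.1) := by fun_prop
    let η : Kernel M ℝ := (Kernel.id ×ₖ (κ.comap (φ t) hm)).map (fun p => p.2 - F t p.1)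
    have : IsMarkovKernel η := Kernel.IsMarkovKernel.map _ hg
    have hη : ∀ x, η x = (κ (φ t x)).map (fun y => y - F t x) := by
      intro x
      simp only [η]
      rw [Kernel.map_apply _ hg, Kernel.prod_apply, Kernel.id_apply, Kernel.comap_apply,
        Measure.dirac_prod, Measure.map_map hg (by fun_prop)]
      rfl
    have hcp : ν = ν.fst ⊗ₘ η := by
      rw [hfst]
      refine (Measure.ext_of_lintegral _ fun g hg' => ?_)
      rw [Measure.lintegral_compProd hg']
      have hm' := (hinv (-t)).measurable
      let h : M × ℝ → ℝ≥0∞ := fun p => g (φ (-t) p.1, p.2 - F t (φ (-t) p.1))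
      have hh : Measurable h := by
        refine hg'.comp ?_
        fun_prop
      have e1 : ∀ x, ∫⁻ b, g (x, b) ∂(η x) = ∫⁻ b, h (φ t x, b) ∂(κ (φ t x)) := by
        intro x
        rw [hη, lintegral_map (by fun_prop) (by fun_prop)]
        simp [h, hinvφ]
      simp_rw [e1]
      rw [(hinv t).lintegral_comp (f := fun x => ∫⁻ b, h (x, b) ∂(κ x)) 
        (Measurable.lintegral_kernel_prod_right' hh), ← Measure.lintegral_compProd hh, hdis,
        ← (hν t).lintegral_comp hh]
      simp [h, hinvφ]
    have := eq_condKernel_of_measure_eq_compProd η hcp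
    rw [hfst] at this
    filter_upwards [this] with x hx c
    rw [hκ, ← hx, hη, Measure.map_apply (by fun_prop) measurableSet_Iic]
    congr 1
    ext y
    simp
  let S : M → Set ℝ := fun x => {c | 1/2 ≤ κ x (Set.Iic c)}
  have hne : ∀ x, (S x).Nonempty := by
    intro x
    have := tendsto_measure_Iic_atTop (κ x)
    rw [measure_univ] at this
    obtain ⟨c, hc⟩ := (this.eventually (lt_mem_nhds (ENNReal.one_half_lt_one))).exists
    exact ⟨c, by simpa [S] using hc.le⟩
  have hbd : ∀ x, BddBelow (S x) := by
    intro x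
    have := ENNReal.tendsto_ofReal (tendsto_cdf_atBot (κ x))
    simp only [ofReal_cdf, ENNReal.ofReal_zero] at this
    obtain ⟨c, hc⟩ := (this.eventually (gt_mem_nhds (show (0:ℝ≥0∞) < 1/2 by simp))).exists
    refine ⟨c, fun d hd => ?_⟩
    by_contra hlt
    push Not at hlt
    have : κ x (Set.Iic d) ≤ κ x (Set.Iic c) := measure_mono (Set.Iic_subset_Iic.2 hlt.le)
    exact absurd (hd.trans this) (not_le.2 hc)
  refine ⟨fun x => sInf (S x), ?_, ?_⟩
  · refine measurable_of_Iio fun r => ?_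
    have : (fun x => sInf (S x)) ⁻¹' Set.Iio r =
        ⋃ q : ℚ, ⋃ (_ : (q:ℝ) < r), {x | 1/2 ≤ κ x (Set.Iic (q:ℝ))} := by
      ext x
      simp only [Set.mem_preimage, Set.mem_Iio, Set.mem_iUnion, Set.mem_ofPred_eq, exists_prop]
      constructor
      · intro h
        obtain ⟨c, hc, hcr⟩ := exists_lt_of_csInf_lt (hne x) h
        obtain ⟨q, hq1, hq2⟩ := exists_rat_btwn hcr
        exact ⟨q, hq2, le_trans hc (measure_mono (Set.Iic_subset_Iic.2 hq1.le))⟩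
      · rintro ⟨q, hq, h⟩
        exact lt_of_le_of_lt (csInf_le (hbd x) h) hq
    rw [this]
    refine MeasurableSet.iUnion fun q => MeasurableSet.iUnion fun _ => ?_
    exact measurableSet_le measurable_const (Kernel.measurable_coe κ measurableSet_Iic)
  · intro t
    filter_upwards [key t] with x hx
    have : sInf (S (φ t x)) = sInf (S x) + F t x := by
      apply le_antisymm
      · rw [← sub_le_iff_le_add]
        refine le_csInf (hne x) fun c hc => ?_
        rw [sub_le_iff_le_add]
        refine csInf_le (hbd _) ?_
        simp only [S, Set.mem_ofPred_eq] at hc ⊢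
        rwa [← hx c]
      · refine le_csInf (hne _) fun c hc => ?_
        rw [← le_sub_iff_add_le]
        refine csInf_le (hbd _) ?_
        simp only [S, Set.mem_ofPred_eq] at hc ⊢
        rw [hx]; simpa using hc
    linarith

open MeasureTheory Filter
open scoped CompactlySupported ENNReal

lemma exists_limit_measure {X : Type*} [TopologicalSpace X] [T2Space X] [LocallyCompactSpace X]
    [MeasurableSpace X] [BorelSpace X] (U : Ultrafilter ℝ)
    (A : ℝ → C_c(X, ℝ) →ₗ[ℝ] ℝ)
    (hpos : ∀ g : C_c(X, ℝ), (∀ x, 0 ≤ g x) → ∀ᶠ T in (U : Filter ℝ), 0 ≤ A T g)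
    (hbd : ∀ (g : C_c(X, ℝ)) (B : ℝ), (∀ x, |g x| ≤ B) → ∀ᶠ T in (U : Filter ℝ), |A T g| ≤ B) :
    ∃ ν : Measure X, ν.Regular ∧ ν Set.univ ≤ 1 ∧
      ∀ g : C_c(X, ℝ), Tendsto (fun T => A T g) U (nhds (∫ x, g x ∂ν)) := by
  have hlim : ∀ g : C_c(X, ℝ), ∃ L : ℝ, Tendsto (fun T => A T g) U (nhds L) := by
    intro g
    obtain ⟨B, hB⟩ := g.hasCompactSupport.exists_bound_of_continuous g.continuous
    have := hbd g B (fun x => by simpa using hB x)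
    have h2 : (U.map (fun T => A T g) : Filter ℝ) ≤ 𝓟 (Set.Icc (-B) B) := by
      simp only [Ultrafilter.coe_map, le_principal_iff, mem_map]
      filter_upwards [this] with T hT
      exact abs_le.1 hT
    obtain ⟨L, _, hL⟩ := isCompact_Icc.ultrafilter_le_nhds _ h2
    exact ⟨L, hL⟩
  choose L hL using hlim
  let Λ : C_c(X, ℝ) →ₚ[ℝ] ℝ := PositiveLinearMap.mk₀
    { toFun := L
      map_add' := fun g k => tendsto_nhds_unique (hL (g + k)) (by
        simpa using (hL g).add (hL k))
      map_smul' := fun c g => tendsto_nhds_unique (hL (c • g)) (by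
        simpa using (hL g).const_mul c) }
    (fun g hg => ge_of_tendsto (hL g) (hpos g hg))
  have hΛ : ∀ g, Λ g = L g := fun g => rfl
  refine ⟨RealRMK.rieszMeasure Λ, inferInstance, ?_, ?_⟩
  · rw [isOpen_univ.measure_eq_iSup_isCompact]
    refine iSup_le fun K => iSup_le fun _ => iSup_le fun hK => ?_
    obtain ⟨f, hf1, hf2, -, hf3⟩ :=
      exists_continuousMap_one_of_isCompact_subset_isOpen hK isOpen_univ K.subset_univ
    let g : C_c(X, ℝ) := ⟨f, hf2⟩
    refine (RealRMK.rieszMeasure_le_of_eq_one Λ (f := g) (fun x => (hf3 x).1) hK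
      (fun x hx => hf1 hx)).trans ?_
    rw [hΛ]
    apply ENNReal.ofReal_le_one.2
    refine le_of_tendsto (hL g) ?_
    filter_upwards [hbd g 1 (fun x => abs_le.2 ⟨by linarith [(hf3 x).1, show g x = f x from rfl], (hf3 x).2⟩)] with T hT
    exact (abs_le.1 hT).2
  · intro g
    rw [RealRMK.integral_rieszMeasure, hΛ]
    exact hL g

theorem growth_in_cesaro_average
    {M : Type*} [MetricSpace M] [CompactSpace M] [MeasurableSpace M] [BorelSpace M]
    (φ : ℝ → M → M) (hφc : Continuous fun p : ℝ × M => φ p.1 p.2)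
    (hφ0 : φ 0 = id) (hφadd : ∀ s t : ℝ, φ (t + s) = φ t ∘ φ s)
    (μ : Measure M) [IsProbabilityMeasure μ]
    (hinv : ∀ t : ℝ, MeasurePreserving (φ t) μ μ)
    (huniq : ∀ ν : Measure M, IsProbabilityMeasure ν →
      (∀ t : ℝ, MeasurePreserving (φ t) ν ν) → ν = μ)
    (f : M → ℝ) (hf : Continuous f)
    (F : ℝ → M → ℝ) (hF : ∀ (t : ℝ) (x : M), F t x = ∫ τ in (0:ℝ)..t, f (φ τ x))
    (hnc : ¬ ∃ u : M → ℝ, Measurable u ∧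
      ∀ t : ℝ, ∀ᵐ x ∂μ, F t x = u (φ t x) - u x) :
    ∀ C : ℝ, 1 < C →
      Tendsto (fun T : ℝ => (1 / T) * ∫ t in (0:ℝ)..T, (μ {x : M | |F t x| < C}).toReal)
        atTop (nhds 0) := by
  intro C hC
  by_contra hnot
  apply hnc
  have hφt : ∀ t, Continuous (φ t) := fun t => hφc.comp (Continuous.prodMk_right t)
  have hinvφ : ∀ t x, φ (-t) (φ t x) = x := by
    intro t x
    have := congrFun (hφadd t (-t)) x
    simp [hφ0] at this
    exact this.symm
  have hFc : Continuous fun p : ℝ × M => F p.1 p.2 := by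
    simp_rw [hF]
    apply intervalIntegral.continuous_parametric_intervalIntegral_of_continuous
      (f := fun (p : ℝ × M) τ => f (φ τ p.2))
    · exact hf.comp (hφc.comp (f := fun q : (ℝ × M) × ℝ => (q.2, q.1.2)) (by fun_prop))
    · fun_prop
  have hFt : ∀ t, Continuous (F t) := fun t => hFc.comp (Continuous.prodMk_right t)
  have hcoc : ∀ s t x, F (t + s) x = F t x + F s (φ t x) := by
    intro s t x
    have hc : Continuous fun τ => f (φ τ x) := hf.comp (hφc.comp (Continuous.prodMk_left x))
    rw [hF, hF, hF, ← intervalIntegral.integral_add_adjacent_intervals (b := t)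
      (hc.intervalIntegrable _ _) (hc.intervalIntegrable _ _)]
    congr 1
    have : ∀ τ, f (φ τ (φ t x)) = f (φ (τ + t) x) := fun τ => by rw [hφadd]; rfl
    simp_rw [this]
    rw [intervalIntegral.integral_comp_add_right (fun τ => f (φ τ x))]
    simp [add_comm]
  -- the averaged functionals
  have hhc : ∀ g : C_c(M × ℝ, ℝ), Continuous fun t => ∫ x, g (φ t x, F t x) ∂μ := by
    intro g
    have := continuous_parametric_integral_of_continuous (μ := μ)
      (f := fun (t : ℝ) (x : M) => g (φ t x, F t x)) (s := Set.univ)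
      (g.continuous.comp (hφc.prodMk hFc)) isCompact_univ
    simpa using this
  have hxi : ∀ (g : C_c(M × ℝ, ℝ)) t, Integrable (fun x => g (φ t x, F t x)) μ := fun g t =>
    Continuous.integrable_of_hasCompactSupport
      (g.continuous.comp ((hφt t).prodMk (hFt t))) (HasCompactSupport.of_compactSpace _)
  have hti : ∀ (g : C_c(M × ℝ, ℝ)) a b,
      IntervalIntegrable (fun t => ∫ x, g (φ t x, F t x) ∂μ) volume a b :=
    fun g a b => (hhc g).intervalIntegrable a b
  let A : ℝ → C_c(M × ℝ, ℝ) →ₗ[ℝ] ℝ := fun T =>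
    { toFun := fun g => (1 / T) * ∫ t in (0:ℝ)..T, ∫ x, g (φ t x, F t x) ∂μ
      map_add' := fun g k => by
        rw [← mul_add, ← intervalIntegral.integral_add (hti g _ _) (hti k _ _)]
        congr 1
        refine intervalIntegral.integral_congr fun t _ => ?_
        exact integral_add (hxi g t) (hxi k t)
      map_smul' := fun c g => by
        simp only [CompactlySupportedContinuousMap.smul_apply, smul_eq_mul, integral_const_mul,
          intervalIntegral.integral_const_mul, RingHom.id_apply]
        ring }
  have hA : ∀ T g, A T g = (1 / T) * ∫ t in (0:ℝ)..T, ∫ x, g (φ t x, F t x) ∂μ := fun _ _ => rfl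
  have hhb : ∀ (g : C_c(M × ℝ, ℝ)) (B : ℝ), (∀ x, |g x| ≤ B) →
      ∀ t, |∫ x, g (φ t x, F t x) ∂μ| ≤ B := by
    intro g B hB t
    have := norm_integral_le_of_norm_le_const (μ := μ) (f := fun x => g (φ t x, F t x)) (C := B)
      (Eventually.of_forall fun x => hB _)
    simpa using this
  -- the ultrafilter
  have hnn : ∀ T : ℝ, 0 < T →
      0 ≤ (1 / T) * ∫ t in (0:ℝ)..T, (μ {x : M | |F t x| < C}).toReal := fun T hT =>
    mul_nonneg (by positivity) (intervalIntegral.integral_nonneg hT.le fun _ _ => by positivity)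
  obtain ⟨δ, hδ, hfr⟩ : ∃ δ > 0, ∃ᶠ T in atTop,
      δ ≤ (1 / T) * ∫ t in (0:ℝ)..T, (μ {x : M | |F t x| < C}).toReal := by
    by_contra hcon
    push Not at hcon
    apply hnot
    rw [Metric.tendsto_nhds]
    intro ε hε
    have h1 := hcon ε hε
    filter_upwards [h1, eventually_gt_atTop 0] with T h1 hT
    rw [Real.dist_eq, sub_zero, abs_of_nonneg (hnn T hT)]
    exact h1
  have hne : NeBot (atTop ⊓ 𝓟 {T : ℝ |
      δ ≤ (1 / T) * ∫ t in (0:ℝ)..T, (μ {x : M | |F t x| < C}).toReal}) :=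
    frequently_mem_iff_neBot.1 hfr
  let U : Ultrafilter ℝ := Ultrafilter.of (atTop ⊓ 𝓟 {T : ℝ |
      δ ≤ (1 / T) * ∫ t in (0:ℝ)..T, (μ {x : M | |F t x| < C}).toReal})
  have hU := Ultrafilter.of_le (atTop ⊓ 𝓟 {T : ℝ |
      δ ≤ (1 / T) * ∫ t in (0:ℝ)..T, (μ {x : M | |F t x| < C}).toReal})
  have hUtop : (U : Filter ℝ) ≤ atTop := hU.trans inf_le_left
  have hUδ : ∀ᶠ T in (U : Filter ℝ), 
      δ ≤ (1 / T) * ∫ t in (0:ℝ)..T, (μ {x : M | |F t x| < C}).toReal := 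
    hU.trans inf_le_right (mem_principal_self _)
  have hU0 : ∀ᶠ T in (U : Filter ℝ), 0 < T := hUtop (eventually_gt_atTop 0)
  obtain ⟨ν, hreg, hν1, hνlim⟩ := exists_limit_measure U A
    (by
      intro g hg
      filter_upwards [hU0] with T hT
      rw [hA]
      exact mul_nonneg (by positivity) (intervalIntegral.integral_nonneg hT.le fun _ _ =>
        integral_nonneg fun _ => hg _))
    (by
      intro g B hB
      filter_upwards [hU0] with T hT
      rw [hA, abs_mul, abs_of_pos (by positivity : 0 < 1 / T)]
      have := intervalIntegral.norm_integral_le_of_norm_le_const (a := 0) (b := T) (C := B)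
        (f := fun t => ∫ x, g (φ t x, F t x) ∂μ) (fun t _ => hhb g B hB t)
      rw [Real.norm_eq_abs, sub_zero, abs_of_pos hT] at this
      rw [one_div, inv_mul_le_iff₀ hT]
      linarith)
  have hfin : IsFiniteMeasure ν := ⟨hν1.trans_lt ENNReal.one_lt_top⟩
  -- nonzero
  have hν0 : ν Set.univ ≠ 0 := by
    intro h0
    have hz : ν = 0 := Measure.measure_univ_eq_zero.1 h0
    let g : C_c(M × ℝ, ℝ) :=
      { toFun := fun p => max 0 (min 1 (C + 1 - |p.2|))
        continuous_toFun := by fun_prop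
        hasCompactSupport' := by
          refine HasCompactSupport.intro (K := Set.univ ×ˢ Set.Icc (-(C+1)) (C+1))
            (isCompact_univ.prod isCompact_Icc) ?_
          rintro ⟨x, y⟩ hxy
          simp only [Set.mem_prod, Set.mem_univ, true_and, Set.mem_Icc, ← abs_le, not_le] at hxy
          exact max_eq_left ((min_le_right _ _).trans (by linarith)) }
    have hg : ∀ p, g p = max 0 (min 1 (C + 1 - |p.2|)) := fun _ => rfl
    have hl := hνlim g
    rw [hz, integral_zero_measure] at hl
    refine absurd (ge_of_tendsto hl (b := δ) ?_) (not_le.2 hδ)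
    filter_upwards [hUδ, hU0] with T h1 hT
    refine h1.trans ?_
    rw [hA]
    refine mul_le_mul_of_nonneg_left ?_ (by positivity)
    rw [intervalIntegral.integral_of_le hT.le, intervalIntegral.integral_of_le hT.le]
    refine integral_mono_of_nonneg (Eventually.of_forall fun _ => by positivity)
      ((hti g 0 T).1) (Eventually.of_forall fun t => ?_)
    have hms : MeasurableSet {x | |F t x| < C} :=
      (isOpen_lt (hFt t).abs continuous_const).measurableSet
    change μ.real {x | |F t x| < C} ≤ _
    rw [← integral_indicator_one hms]
    refine integral_mono ((integrable_const (1:ℝ)).indicator hms) (hxi g t) fun x => ?_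
    by_cases hx : |F t x| < C
    · rw [Set.indicator_of_mem (by exact hx), hg]
      exact le_max_of_le_right (le_min le_rfl (by simp; linarith))
    · rw [Set.indicator_of_notMem (by exact hx), hg]
      exact le_max_left _ _
  -- invariance
  have hΦc : ∀ s, Continuous (fun p : M × ℝ => (φ s p.1, p.2 + F s p.1)) := fun s =>
    ((hφt s).comp continuous_fst).prodMk (continuous_snd.add ((hFt s).comp continuous_fst))
  have hF0 : ∀ x, F 0 x = 0 := fun x => by rw [hF]; simp
  have hΦinv : ∀ s (p : M × ℝ), (φ (-s) (φ s p.1), (p.2 + F s p.1) + F (-s) (φ s p.1)) = p := by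
    intro s p
    have := hcoc (-s) s p.1
    rw [add_neg_cancel, hF0] at this
    rw [hinvφ, add_assoc, ← this, add_zero]
  let Φ : ℝ → (M × ℝ) ≃ₜ (M × ℝ) := fun s =>
    { toFun := fun p => (φ s p.1, p.2 + F s p.1)
      invFun := fun p => (φ (-s) p.1, p.2 + F (-s) p.1)
      left_inv := hΦinv s
      right_inv := fun p => by simpa using hΦinv (-s) p
      continuous_toFun := hΦc s
      continuous_invFun := hΦc (-s) }
  have hΦ : ∀ s p, Φ s p = (φ s p.1, p.2 + F s p.1) := fun _ _ => rfl
  have hνinv : ∀ s, MeasurePreserving (fun p : M × ℝ => (φ s p.1, p.2 + F s p.1)) ν ν := by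
    intro s
    refine ⟨(hΦc s).measurable, ?_⟩
    change Measure.map (Φ s) ν = ν
    have : (Measure.map (Φ s) ν).Regular := Measure.Regular.map (Φ s)
    refine Measure.ext_of_integral_eq_on_compactlySupported fun g => ?_
    rw [(Φ s).isClosedEmbedding.measurableEmbedding.integral_map]
    let k : C_c(M × ℝ, ℝ) := ⟨⟨fun p => g (Φ s p), g.continuous.comp (Φ s).continuous⟩,
      g.hasCompactSupport.comp_homeomorph (Φ s)⟩
    change ∫ x, k x ∂ν = _
    refine tendsto_nhds_unique (hνlim k) ?_
    obtain ⟨B, hB⟩ := g.hasCompactSupport.exists_bound_of_continuous g.continuous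
    have hdiff : Tendsto (fun T => A T k - A T g) U (nhds 0) := by
      refine Tendsto.mono_left ?_ hUtop
      have hz : Tendsto (fun T : ℝ => (2 * (B * |s|)) / T) atTop (nhds 0) :=
        tendsto_const_nhds.div_atTop tendsto_id
      refine squeeze_zero_norm' ?_ hz
      filter_upwards [eventually_gt_atTop 0] with T hT
      rw [hA, hA, ← mul_sub]
      have e : ∀ t x, k (φ t x, F t x) = g (φ (t + s) x, F (t + s) x) := by
        intro t x
        change g (Φ s _) = _
        rw [hΦ, hcoc, add_comm t s, hφadd]
        rfl
      simp_rw [e]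
      rw [intervalIntegral.integral_comp_add_right (fun t => ∫ x, g (φ t x, F t x) ∂μ),
        zero_add, intervalIntegral.integral_interval_sub_interval_comm' (hti g _ _) (hti g _ _)
          (hti g _ _), norm_mul, Real.norm_eq_abs, abs_of_pos (by positivity : 0 < 1 / T)]
      have b1 := intervalIntegral.norm_integral_le_of_norm_le_const (a := T) (b := T + s) (C := B)
        (f := fun t => ∫ x, g (φ t x, F t x) ∂μ) (fun t _ => hhb g B hB t)
      have b2 := intervalIntegral.norm_integral_le_of_norm_le_const (a := 0) (b := s) (C := B)
        (f := fun t => ∫ x, g (φ t x, F t x) ∂μ) (fun t _ => hhb g B hB t)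
      have b3 := norm_sub_le (∫ t in T..T+s, ∫ x, g (φ t x, F t x) ∂μ)
        (∫ t in (0:ℝ)..s, ∫ x, g (φ t x, F t x) ∂μ)
      rw [add_sub_cancel_left] at b1
      rw [sub_zero] at b2
      rw [one_div, inv_mul_eq_div]
      gcongr
      linarith
    simpa using hdiff.add (hνlim g)
  -- normalise
  let c : ℝ≥0∞ := (ν Set.univ)⁻¹
  have hprob : IsProbabilityMeasure (c • ν) := ⟨by
    simp only [c, Measure.smul_apply, smul_eq_mul]
    exact ENNReal.inv_mul_cancel hν0 (measure_ne_top _ _)⟩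
  have hνinv' : ∀ s, MeasurePreserving (fun p : M × ℝ => (φ s p.1, p.2 + F s p.1))
      (c • ν) (c • ν) := fun s => ⟨(hνinv s).measurable, by
        rw [Measure.map_smul, (hνinv s).map_eq]⟩
  have hfst : (c • ν).fst = μ := by
    refine huniq _ inferInstance fun t => ⟨(hφt t).measurable, ?_⟩
    conv_rhs => rw [Measure.fst, ← (hνinv' t).map_eq]
    rw [Measure.fst, Measure.map_map (hφt t).measurable measurable_fst,
      Measure.map_map measurable_fst (hνinv' t).measurable]
    rfl
  exact exists_transfer φ hinvφ μ hinv F (fun t => (hFt t).measurable) (c • ν) hfst hνinv'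
end

section
/- (Growth along arithmetic progressions.) Let M be a compact metric space, φ : ℝ × M → M a continuous flow, and μ a φ-invariant Borel probability measure which is the unique φ-invariant Borel probability measure on M. Let f : M → ℝ be continuous and set F_t(x) := ∫₀^t f(φ_τ(x)) dτ. Assume f is not a measurable coboundary for φ, and let C > 1. Then for every ε > 0 and every integer ℓ ≥ 1 there exists t₀ > 0 such that μ{x ∈ M : |F_{i t₀}(x)| < C} < ε for all i = 1, …, ℓ. -/
open MeasureTheory Filter

/-- Averaging a time-one invariant finite measure over a period gives a flow-invariant one. -/
theorem gap_average {X : Type*} [MeasurableSpace X] (Φ : ℝ → X → X)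
    (hm : Measurable fun p : ℝ × X => Φ p.1 p.2)
    (hadd : ∀ s t : ℝ, Φ (t + s) = Φ t ∘ Φ s)
    (ν : Measure X) [IsFiniteMeasure ν] (hν0 : ν ≠ 0)
    (h1 : MeasurePreserving (Φ 1) ν ν) :
    ∃ ρ : Measure X, IsFiniteMeasure ρ ∧ ρ ≠ 0 ∧ ∀ t, MeasurePreserving (Φ t) ρ ρ := by
  have hmt : ∀ t, Measurable (Φ t) := fun t => hm.comp measurable_prodMk_left
  set ρ : Measure X := ((volume.restrict (Set.Ioc (0:ℝ) 1)).prod ν).map (fun p => Φ p.1 p.2) with hρ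
  have hρA : ∀ A, MeasurableSet A → ρ A = ∫⁻ s in Set.Ioc (0:ℝ) 1, ν (Φ s ⁻¹' A) := by
    intro A hA
    rw [hρ, Measure.map_apply hm hA, Measure.prod_apply (hm hA)]
    rfl
  refine ⟨ρ, inferInstance, ?_, ?_⟩
  · intro h
    have := hρA Set.univ MeasurableSet.univ
    rw [h] at this
    simp at this
    exact hν0 (Measure.measure_univ_eq_zero.1 this.symm)
  · intro t
    refine ⟨hmt t, ?_⟩
    ext A hA
    rw [Measure.map_apply (hmt t) hA, hρA _ (hmt t hA), hρA _ hA]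
    set q : ℝ → ENNReal := fun s => ν (Φ s ⁻¹' A) with hq
    have hq1 : Function.Periodic q 1 := by
      intro s
      simp only [hq]
      rw [hadd 1 s, Set.preimage_comp, h1.measure_preimage (hmt s hA).nullMeasurableSet]
    have e1 : ∀ s, ν (Φ s ⁻¹' (Φ t ⁻¹' A)) = q (s + t) := by
      intro s
      simp only [hq]
      rw [add_comm, hadd s t, Set.preimage_comp]
    simp_rw [e1]
    have e2 := (measurePreserving_add_right (volume : Measure ℝ) t).setLIntegral_comp_emb
      (measurableEmbedding_addRight t) q (Set.Ioc 0 1)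
    rw [e2]
    have e3 : (fun x : ℝ => x + t) '' Set.Ioc 0 1 = Set.Ioc t (t + 1) := by
      rw [Set.image_add_const_Ioc, zero_add, add_comm]
    rw [e3]
    have e4 := (isAddFundamentalDomain_Ioc one_pos t volume).setLIntegral_eq
      (isAddFundamentalDomain_Ioc one_pos (0:ℝ) volume) q (by
        rintro ⟨g, n, rfl⟩ x
        have := (hq1.zsmul n) x
        rw [← this]
        simp [AddSubgroup.vadd_def, add_comm])
    rw [e4, zero_add]

/-- An invariant `L²` function produces an invariant finite measure. -/
theorem gap_density {X : Type*} [MeasurableSpace X] (m : Measure X) (T : X → X)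
    (hT : MeasurePreserving T m m) (h : Lp ℝ 2 m) (hh : h ≠ 0)
    (hinv : Lp.compMeasurePreserving T hT h = h) :
    ∃ ν : Measure X, IsFiniteMeasure ν ∧ ν ≠ 0 ∧ MeasurePreserving T ν ν := by
  have hmeas : Measurable (h : X → ℝ) := (Lp.stronglyMeasurable h).measurable
  set d : X → ENNReal := fun x => ‖h x‖ₑ ^ (2:ℝ) with hd
  have hdm : Measurable d := hmeas.enorm.pow_const _
  have hdT : d ∘ T =ᵐ[m] d := by
    have := Lp.coeFn_compMeasurePreserving h hT
    rw [hinv] at this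
    filter_upwards [this] with x hx
    simp only [hd, Function.comp_apply] at hx ⊢
    rw [hx]
  refine ⟨m.withDensity d, ?_, ?_, hT.measurable, ?_⟩
  · apply isFiniteMeasure_withDensity
    have := (eLpNorm_lt_top_iff_lintegral_rpow_enorm_lt_top (f := h) (μ := m) (p := 2)
      (by simp) (by simp)).1 (Lp.eLpNorm_lt_top h)
    simpa [hd] using this.ne
  · rw [Ne, withDensity_eq_zero_iff hdm.aemeasurable]
    intro h0
    apply hh
    rw [Lp.eq_zero_iff_ae_eq_zero]
    filter_upwards [h0] with x hx
    simpa [hd] using hx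
  · ext A hA
    rw [Measure.map_apply hT.measurable hA, withDensity_apply _ (hT.measurable hA),
      withDensity_apply _ hA, ← hT.setLIntegral_comp_preimage hA hdm]
    exact lintegral_congr_ae (ae_restrict_of_ae (hdT.mono fun x hx => hx.symm))

/-- Mean ergodic theorem for a linear isometry without fixed vectors. -/
theorem gap_hilbert {E : Type*} [NormedAddCommGroup E] [InnerProductSpace ℝ E] [CompleteSpace E]
    (V : E →ₗᵢ[ℝ] E) (hno : ∀ h, V h = h → h = 0) (g : E) :
    Tendsto (fun N : ℕ => (N:ℝ)⁻¹ * ∑ n ∈ Finset.range N, inner ℝ (V^[n] g) g)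
      atTop (nhds 0) := by
  set U : E →L[ℝ] E := V.toContinuousLinearMap with hU
  have key := U.tendsto_birkhoffAverage_orthogonalProjection V.norm_toContinuousLinearMap_le g
  have hp : ((U.eqLocus (1 : E →L[ℝ] E)).orthogonalProjectionOnto g : E) = 0 := by
    apply hno
    exact ((U.eqLocus (1 : E →L[ℝ] E)).orthogonalProjectionOnto g).2
  rw [hp] at key
  have k2 := key.inner (tendsto_const_nhds (x := g)) (𝕜 := ℝ)
  rw [inner_zero_left] at k2
  refine k2.congr fun N => ?_
  rw [birkhoffAverage, birkhoffSum, real_inner_smul_left, sum_inner]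
  rfl

/-- Mean ergodic theorem: without fixed vectors, correlations vanish on average. -/
theorem gap_cesaro {X : Type*} [MeasurableSpace X] (m : Measure X) (T : X → X)
    (hT : MeasurePreserving T m m)
    (hno : ∀ h : Lp ℝ 2 m, Lp.compMeasurePreserving T hT h = h → h = 0)
    (S : Set X) (hS : MeasurableSet S) (hSm : m S ≠ ⊤) :
    Tendsto (fun N : ℕ => (N:ℝ)⁻¹ * ∑ n ∈ Finset.range N, m.real (T^[n] ⁻¹' S ∩ S))
      atTop (nhds 0) := by
  have key := gap_hilbert (Lp.compMeasurePreservingₗᵢ (E := ℝ) (p := 2) ℝ T hT) hno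
    (indicatorConstLp 2 hS hSm (1:ℝ))
  have hit : ∀ n : ℕ, ∃ (h1 : MeasurableSet (T^[n] ⁻¹' S)) (h2 : m (T^[n] ⁻¹' S) ≠ ⊤),
      (Lp.compMeasurePreservingₗᵢ (E := ℝ) (p := 2) ℝ T hT)^[n] (indicatorConstLp 2 hS hSm (1:ℝ))
        = indicatorConstLp 2 h1 h2 (1:ℝ) := by
    intro n
    induction n with
    | zero => exact ⟨hS, hSm, rfl⟩
    | succ n ih =>
      obtain ⟨h1, h2, h3⟩ := ih
      refine ⟨(hT.measurable.iterate _) hS, ?_, ?_⟩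
      · rwa [(hT.iterate _).measure_preimage hS.nullMeasurableSet]
      · rw [Function.iterate_succ_apply', h3]
        exact Lp.indicatorConstLp_compMeasurePreserving h1 h2 (1:ℝ) hT
  refine key.congr fun N => ?_
  congr 1
  refine Finset.sum_congr rfl fun n _ => ?_
  obtain ⟨h1, h2, h3⟩ := hit n
  rw [h3, L2.real_inner_indicatorConstLp_one_indicatorConstLp_one]

/-- Combinatorial selection from vanishing averages. -/
theorem gap_select (a : ℕ → ℝ) (ha : ∀ n, 0 ≤ a n)
    (hlim : Tendsto (fun N : ℕ => (N:ℝ)⁻¹ * ∑ n ∈ Finset.range N, a n) atTop (nhds 0))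
    (ε : ℝ) (hε : 0 < ε) (l : ℕ) (hl : 1 ≤ l) :
    ∃ n : ℕ, 0 < n ∧ ∀ i, 1 ≤ i → i ≤ l → a (i * n) < ε := by
  by_contra hcon
  push Not at hcon
  have hlpos : (0:ℝ) < l := by exact_mod_cast hl
  -- each block sum is at least `ε`
  have h1 : ∀ n, 0 < n → ε ≤ ∑ i ∈ Finset.Icc 1 l, a (i * n) := by
    intro n hn
    obtain ⟨i, hi1, hi2, hi3⟩ := hcon n hn
    exact hi3.trans (Finset.single_le_sum (f := fun i => a (i * n)) (fun j _ => ha _)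
      (Finset.mem_Icc.2 ⟨hi1, hi2⟩))
  have h2 : ∀ N : ℕ, ε * N ≤ l * ∑ m ∈ Finset.range (l * N + 1), a m := by
    intro N
    calc ε * N = ∑ n ∈ Finset.Icc 1 N, ε := by simp [mul_comm]
      _ ≤ ∑ n ∈ Finset.Icc 1 N, ∑ i ∈ Finset.Icc 1 l, a (i * n) :=
          Finset.sum_le_sum fun n hn => h1 n (Finset.mem_Icc.1 hn).1
      _ = ∑ i ∈ Finset.Icc 1 l, ∑ n ∈ Finset.Icc 1 N, a (i * n) := Finset.sum_comm
      _ ≤ ∑ i ∈ Finset.Icc 1 l, ∑ m ∈ Finset.range (l * N + 1), a m := by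
          refine Finset.sum_le_sum fun i hi => ?_
          rw [Finset.mem_Icc] at hi
          have hinj : Set.InjOn (fun n => i * n) (Finset.Icc 1 N : Finset ℕ) :=
            fun x _ y _ hxy => Nat.eq_of_mul_eq_mul_left hi.1 hxy
          rw [← Finset.sum_image (f := a) hinj]
          refine Finset.sum_le_sum_of_subset_of_nonneg ?_ fun _ _ _ => ha _
          intro m hm
          obtain ⟨n, hn, rfl⟩ := Finset.mem_image.1 hm
          rw [Finset.mem_Icc] at hn
          have := Nat.mul_le_mul hi.2 hn.2
          exact Finset.mem_range.2 (by omega)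
      _ = l * ∑ m ∈ Finset.range (l * N + 1), a m := by simp
  have hδ : 0 < ε / (2 * l * l) := by positivity
  obtain ⟨N₀, hN₀⟩ := eventually_atTop.1 (hlim.eventually (gt_mem_nhds hδ))
  set N := N₀ + 1 with hN
  have h3 := hN₀ (l * N + 1) (by nlinarith)
  have hNpos : (1:ℝ) ≤ N := by rw [hN]; push_cast; linarith [(Nat.cast_nonneg N₀ : (0:ℝ) ≤ N₀)]
  have h4 := h2 N
  have hpos : (0:ℝ) < ((l * N + 1 : ℕ) : ℝ) := by positivity
  rw [inv_mul_lt_iff₀ hpos, mul_div_assoc', lt_div_iff₀ (by positivity)] at h3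
  push_cast at h3
  have hl1 : (1:ℝ) ≤ l := by exact_mod_cast hl
  have h5 : (1:ℝ) ≤ l * N := by nlinarith
  have h6 : 2 * l * (ε * N) ≤ (2 * l) * (l * ∑ m ∈ Finset.range (l * N + 1), a m) := by
    gcongr
  have h7 : (l * N + 1 : ℝ) * ε ≤ (2 * l * N) * ε := by
    gcongr; linarith
  nlinarith

/-- The median of a probability measure on the line. -/
noncomputable def gapMedian (ν : Measure ℝ) : ℝ := sInf {s : ℝ | 1 / 2 ≤ ν.real (Set.Iic s)}

theorem gapMedian_aux (ν : Measure ℝ) [IsProbabilityMeasure ν] :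
    {s : ℝ | 1 / 2 ≤ ν.real (Set.Iic s)}.Nonempty ∧
    BddBelow {s : ℝ | 1 / 2 ≤ ν.real (Set.Iic s)} := by
  constructor
  · have := (ProbabilityTheory.tendsto_cdf_atTop ν).eventually
      (lt_mem_nhds (show (1/2 : ℝ) < 1 by norm_num))
    obtain ⟨s, hs⟩ := this.exists
    exact ⟨s, by rw [ProbabilityTheory.cdf_eq_real] at hs; exact hs.le⟩
  · have := (ProbabilityTheory.tendsto_cdf_atBot ν).eventually
      (gt_mem_nhds (show (0 : ℝ) < 1/2 by norm_num))
    obtain ⟨s, hs⟩ := this.exists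
    rw [ProbabilityTheory.cdf_eq_real] at hs
    refine ⟨s, fun r hr => ?_⟩
    by_contra hlt
    have : ν.real (Set.Iic r) ≤ ν.real (Set.Iic s) :=
      measureReal_mono (Set.Iic_subset_Iic.2 (not_le.1 hlt).le)
    have hr' : 1 / 2 ≤ ν.real (Set.Iic r) := hr
    linarith

theorem gapMedian_translate (ν : Measure ℝ) [IsProbabilityMeasure ν] (c : ℝ) :
    gapMedian (ν.map (fun s => s - c)) = gapMedian ν - c := by
  have e : ∀ s, (ν.map (fun s => s - c)).real (Set.Iic s) = ν.real (Set.Iic (s + c)) := by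
    intro s
    rw [map_measureReal_apply (by fun_prop) measurableSet_Iic]
    congr 1
    ext r
    simp
  have hset : {s : ℝ | 1 / 2 ≤ (ν.map (fun s => s - c)).real (Set.Iic s)}
      = (OrderIso.subRight c) '' {s : ℝ | 1 / 2 ≤ ν.real (Set.Iic s)} := by
    ext s
    simp only [e, Set.mem_ofPred_eq, Set.mem_image, OrderIso.subRight_apply]
    constructor
    · intro h
      exact ⟨s + c, h, by ring⟩
    · rintro ⟨r, hr, rfl⟩
      simpa using hr
  unfold gapMedian
  rw [hset, ← OrderIso.map_csInf' _ (gapMedian_aux ν).1 (gapMedian_aux ν).2]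
  rfl

theorem gapMedian_measurable {M : Type*} [MeasurableSpace M] (κ : ProbabilityTheory.Kernel M ℝ)
    [ProbabilityTheory.IsMarkovKernel κ] : Measurable fun x => gapMedian (κ x) := by
  apply measurable_of_Iio
  intro a
  have : (fun x => gapMedian (κ x)) ⁻¹' Set.Iio a =
      ⋃ q : ℚ, ⋃ _ : (q:ℝ) < a, {x | 1 / 2 ≤ (κ x).real (Set.Iic (q:ℝ))} := by
    ext x
    simp only [Set.mem_preimage, Set.mem_Iio, Set.mem_iUnion, Set.mem_ofPred_eq, exists_prop]
    unfold gapMedian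
    rw [csInf_lt_iff (gapMedian_aux (κ x)).2 (gapMedian_aux (κ x)).1]
    constructor
    · rintro ⟨s, hs, hsa⟩
      obtain ⟨q, h1, h2⟩ := exists_rat_btwn hsa
      exact ⟨q, h2, le_trans hs (measureReal_mono (Set.Iic_subset_Iic.2 h1.le))⟩
    · rintro ⟨q, h1, h2⟩
      exact ⟨q, h2, h1⟩
  rw [this]
  refine MeasurableSet.iUnion fun q => MeasurableSet.iUnion fun _ => ?_
  exact measurableSet_le measurable_const
    ((κ.measurable_coe measurableSet_Iic).ennreal_toReal)

/-- A finite invariant measure of the skew product flow yields a transfer function. -/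
theorem gap_coboundary {M : Type*} [MeasurableSpace M] (φ : ℝ → M → M)
    (hφm : ∀ t, Measurable (φ t))
    (hφ0 : φ 0 = id) (hφadd : ∀ s t : ℝ, φ (t + s) = φ t ∘ φ s)
    (μ : Measure M)
    (huniq : ∀ ν : Measure M, IsProbabilityMeasure ν →
      (∀ t : ℝ, MeasurePreserving (φ t) ν ν) → ν = μ)
    (F : ℝ → M → ℝ) (hFm : ∀ t, Measurable (F t))
    (hF0 : ∀ x, F 0 x = 0) (hFadd : ∀ s t x, F (t + s) x = F s x + F t (φ s x))
    (ρ₀ : Measure (M × ℝ)) [IsFiniteMeasure ρ₀] (hρ0 : ρ₀ ≠ 0)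
    (hρ₀ : ∀ t, MeasurePreserving (fun p : M × ℝ => (φ t p.1, p.2 + F t p.1)) ρ₀ ρ₀) :
    ∃ u : M → ℝ, Measurable u ∧ ∀ t : ℝ, ∀ᵐ x ∂μ, F t x = u (φ t x) - u x := by
  obtain ⟨ρ, hρp, hρ⟩ : ∃ ρ : Measure (M × ℝ), IsProbabilityMeasure ρ ∧
      ∀ t, MeasurePreserving (fun p : M × ℝ => (φ t p.1, p.2 + F t p.1)) ρ ρ := by
    have : NeZero ρ₀ := ⟨hρ0⟩
    exact ⟨(ρ₀ Set.univ)⁻¹ • ρ₀, inferInstance, fun t => (hρ₀ t).smul_measure _⟩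
  have hfinv : ∀ t, MeasurePreserving (φ t) ρ.fst ρ.fst := by
    intro t
    refine ⟨hφm t, ?_⟩
    rw [Measure.fst, Measure.map_map (hφm t) measurable_fst]
    conv_rhs => rw [← (hρ t).map_eq]
    rw [Measure.map_map measurable_fst (hρ t).measurable]
    rfl
  have hfst : ρ.fst = μ := huniq _ inferInstance hfinv
  refine ⟨fun x => gapMedian (ρ.condKernel x), gapMedian_measurable _, fun t => ?_⟩
  set κ := ρ.condKernel with hκ
  have hB : ∀ B : Set ℝ, MeasurableSet B → Measurable fun x =>
      (κ (φ t x)) ((fun s => s - F t x) ⁻¹' B) := by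
    intro B hB
    have := ProbabilityTheory.Kernel.measurable_kernel_prodMk_left (κ := κ.comap (φ t) (hφm t))
      (t := {p : M × ℝ | p.2 - F t p.1 ∈ B})
      ((measurable_snd.sub ((hFm t).comp measurable_fst)) hB)
    exact this
  let κ' : ProbabilityTheory.Kernel M ℝ :=
    ⟨fun x => (κ (φ t x)).map (fun s => s - F t x), by
      refine Measure.measurable_of_measurable_coe _ fun B hBm => ?_
      have e : (fun x => ((κ (φ t x)).map (fun s => s - F t x)) B) =
          fun x => (κ (φ t x)) ((fun s => s - F t x) ⁻¹' B) := by
        funext x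
        exact Measure.map_apply (by fun_prop) hBm
      rw [e]
      exact hB B hBm⟩
  have hκ' : ∀ x, κ' x = (κ (φ t x)).map (fun s => s - F t x) := fun x => rfl
  have : ProbabilityTheory.IsMarkovKernel κ' :=
    ⟨fun x => by rw [hκ']; exact Measure.isProbabilityMeasure_map (by fun_prop)⟩
  have hinvt : ∀ x, φ (-t) (φ t x) = x := by
    intro x
    have := congrFun (hφadd t (-t)) x
    simpa [hφ0] using this.symm
  have hFneg : ∀ x, F (-t) (φ t x) = - F t x := by
    intro x
    have := hFadd t (-t) x
    rw [neg_add_cancel, hF0] at this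
    linarith
  have heq : ρ = ρ.fst.compProd κ' := by
    apply Measure.ext_prod
    intro A B hA hBm
    have hAB : MeasurableSet (A ×ˢ B) := hA.prod hBm
    rw [Measure.compProd_apply hAB]
    rw [← (hρ (-t)).measure_preimage hAB.nullMeasurableSet]
    conv_lhs => rw [← ρ.disintegrate ρ.condKernel]
    rw [Measure.compProd_apply ((hρ (-t)).measurable hAB)]
    rw [← (hfinv t).lintegral_comp
      (ProbabilityTheory.Kernel.measurable_kernel_prodMk_left ((hρ (-t)).measurable hAB))]
    refine lintegral_congr fun x => ?_
    rw [hκ', Measure.map_apply (by fun_prop) (measurable_prodMk_left hAB)]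
    congr 1
    ext s
    simp [hinvt, hFneg, sub_eq_add_neg]
  have hae := ProbabilityTheory.eq_condKernel_of_measure_eq_compProd κ' heq
  rw [hfst] at hae
  filter_upwards [hae] with x hx
  have h1 := gapMedian_translate (κ (φ t x)) (F t x)
  rw [← hκ', hx] at h1
  rw [h1]; ring

/-- **Growth along arithmetic progressions.**
Let `φ` be a continuous flow on a compact metric space `M`, uniquely ergodic with
invariant Borel probability measure `μ`.  Let `f : M → ℝ` be continuous with Birkhoff
integrals `F t x = ∫₀^t f(φ_τ x) dτ`, and assume `f` is not a measurable coboundary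
for `φ`.  Then for every `C > 1`, `ε > 0` and integer `ℓ ≥ 1` there exists `t₀ > 0`
such that `μ{|F_{i t₀}| < C} < ε` for all `i = 1, …, ℓ`. -/
theorem growth_along_arithmetic_progressions
    {M : Type*} [MetricSpace M] [CompactSpace M] [MeasurableSpace M] [BorelSpace M]
    (φ : ℝ → M → M) (hφc : Continuous fun p : ℝ × M => φ p.1 p.2)
    (hφ0 : φ 0 = id) (hφadd : ∀ s t : ℝ, φ (t + s) = φ t ∘ φ s)
    (μ : Measure M) [IsProbabilityMeasure μ]
    (hinv : ∀ t : ℝ, MeasurePreserving (φ t) μ μ)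
    (huniq : ∀ ν : Measure M, IsProbabilityMeasure ν →
      (∀ t : ℝ, MeasurePreserving (φ t) ν ν) → ν = μ)
    (f : M → ℝ) (hf : Continuous f)
    (F : ℝ → M → ℝ) (hF : ∀ (t : ℝ) (x : M), F t x = ∫ τ in (0:ℝ)..t, f (φ τ x))
    (hnc : ¬ ∃ u : M → ℝ, Measurable u ∧
      ∀ t : ℝ, ∀ᵐ x ∂μ, F t x = u (φ t x) - u x)
    (C : ℝ) (hC : 1 < C) :
    ∀ ε > (0:ℝ), ∀ ℓ : ℕ, 1 ≤ ℓ → ∃ t₀ : ℝ, 0 < t₀ ∧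
      ∀ i : ℕ, 1 ≤ i → i ≤ ℓ →
        μ {x : M | |F ((i : ℝ) * t₀) x| < C} < ENNReal.ofReal ε := by
  intro ε hε ℓ hℓ
  have hFfun : (fun p : ℝ × M => F p.1 p.2) =
      fun p : ℝ × M => ∫ τ in (0:ℝ)..p.1, f (φ τ p.2) := by
    funext p; exact hF p.1 p.2
  have hFc : Continuous fun p : ℝ × M => F p.1 p.2 := by
    rw [hFfun]
    refine intervalIntegral.continuous_parametric_intervalIntegral_of_continuous
      (f := fun (p : ℝ × M) τ => f (φ τ p.2)) ?_ continuous_fst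
    exact hf.comp (hφc.comp (by fun_prop : Continuous fun q : (ℝ × M) × ℝ => (q.2, q.1.2)))
  have hF0 : ∀ x, F 0 x = 0 := fun x => by rw [hF]; simp
  have hcont : ∀ x, Continuous fun τ => f (φ τ x) := fun x =>
    hf.comp (hφc.comp (by fun_prop : Continuous fun τ : ℝ => (τ, x)))
  have hFadd : ∀ s t x, F (t + s) x = F s x + F t (φ s x) := by
    intro s t x
    rw [hF, hF, hF]
    have e : ∀ τ, f (φ τ (φ s x)) = f (φ (τ + s) x) := fun τ => by rw [hφadd s τ]; rfl
    simp_rw [e]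
    rw [intervalIntegral.integral_comp_add_right (fun τ => f (φ τ x)) s, zero_add,
      intervalIntegral.integral_add_adjacent_intervals
        ((hcont x).intervalIntegrable _ _) ((hcont x).intervalIntegrable _ _)]
  have hφm : ∀ t, Measurable (φ t) := fun t => (hinv t).measurable
  have hFm : ∀ t, Measurable (F t) := fun t =>
    (hFc.comp (by fun_prop : Continuous fun x : M => (t, x))).measurable
  set Φ : ℝ → M × ℝ → M × ℝ := fun t p => (φ t p.1, p.2 + F t p.1) with hΦ
  have hΦm : Measurable fun p : ℝ × (M × ℝ) => Φ p.1 p.2 := by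
    have hc : Continuous fun p : ℝ × (M × ℝ) => Φ p.1 p.2 := by
      have c1 : Continuous fun p : ℝ × (M × ℝ) => (p.1, p.2.1) := by fun_prop
      exact (hφc.comp c1).prodMk (continuous_snd.snd.add (hFc.comp c1))
    exact hc.measurable
  have hΦadd : ∀ s t : ℝ, Φ (t + s) = Φ t ∘ Φ s := by
    intro s t
    funext p
    simp only [hΦ, Function.comp_apply, hφadd s t, hFadd s t, add_assoc]
  have hΦ0 : Φ 0 = id := by
    funext p
    simp [hΦ, hφ0, hF0]
  have hΦit : ∀ n : ℕ, (Φ 1)^[n] = Φ n := by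
    intro n
    induction n with
    | zero => simp [hΦ0]
    | succ n ih => rw [Function.iterate_succ', ih, ← hΦadd]; push_cast; rw [add_comm]
  have hΦp : MeasurePreserving (Φ 1) (μ.prod volume) (μ.prod volume) := by
    refine (hinv 1).skew_product (g := fun x s => s + F 1 x) ?_ ?_
    · exact measurable_snd.add ((hFm 1).comp measurable_fst)
    · exact Eventually.of_forall fun x => (measurePreserving_add_right volume (F 1 x)).map_eq
  have hno : ∀ h : Lp ℝ 2 (μ.prod (volume : Measure ℝ)),
      Lp.compMeasurePreserving (Φ 1) hΦp h = h → h = 0 := by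
    intro h hh
    by_contra hne
    obtain ⟨ν, hν1, hν2, hν3⟩ := gap_density _ (Φ 1) hΦp h hne hh
    obtain ⟨ρ, hρ1, hρ2, hρ3⟩ := gap_average Φ hΦm hΦadd ν hν2 hν3
    exact hnc (gap_coboundary φ hφm hφ0 hφadd μ huniq F hFm hF0 hFadd ρ hρ2 hρ3)
  set S : Set (M × ℝ) := Set.univ ×ˢ Set.Icc (-C) (2 * C) with hS
  have hSmeas : MeasurableSet S := MeasurableSet.univ.prod measurableSet_Icc
  have hSfin : (μ.prod (volume : Measure ℝ)) S ≠ ⊤ := by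
    rw [hS, Measure.prod_prod]
    simp
  have hces := gap_cesaro _ (Φ 1) hΦp hno S hSmeas hSfin
  obtain ⟨n, hn, hsel⟩ := gap_select _ (fun n => measureReal_nonneg) hces ε hε ℓ hℓ
  refine ⟨n, by exact_mod_cast hn, fun i hi1 hi2 => ?_⟩
  have hlt := hsel i hi1 hi2
  rw [hΦit] at hlt
  push_cast at hlt
  set t : ℝ := (i:ℝ) * n with ht
  have hsub : {x : M | |F t x| < C} ×ˢ Set.Icc (0:ℝ) C ⊆ Φ t ⁻¹' S ∩ S := by
    rintro ⟨x, s⟩ ⟨hx, hs⟩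
    have hx' : |F t x| < C := hx
    have hs1 : 0 ≤ s := hs.1
    have hs2 : s ≤ C := hs.2
    rw [abs_lt] at hx'
    refine ⟨⟨trivial, ?_, ?_⟩, ⟨trivial, ?_, ?_⟩⟩ <;> simp only [hΦ] <;> linarith
  have hle := measure_mono (μ := μ.prod (volume : Measure ℝ)) hsub
  rw [Measure.prod_prod, Real.volume_Icc, sub_zero] at hle
  have h1C : (1:ENNReal) ≤ ENNReal.ofReal C := by
    rw [← ENNReal.ofReal_one]; exact ENNReal.ofReal_le_ofReal hC.le
  calc μ {x : M | |F t x| < C} = μ {x : M | |F t x| < C} * 1 := (mul_one _).symm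
    _ ≤ μ {x : M | |F t x| < C} * ENNReal.ofReal C := by gcongr
    _ ≤ _ := hle
    _ < ENNReal.ofReal ε := by
      rw [ENNReal.lt_ofReal_iff_toReal_lt]
      · exact hlt
      · exact ne_top_of_le_ne_top hSfin (measure_mono Set.inter_subset_right)
end
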